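/- arXiv:1512.01465 — 3 statements merged into one kernel-verified Lean document; each statement's English description precedes it below -/
import Mathlib

section
/- Feedback sum-capacity, high-energy regime (Proposition 3, case 2): for every real b with 1 + SNR₂₁ + SNR₂₂ + 2·ρ⋆(1,1)·√(SNR₂₁·SNR₂₂) < b < 1 + SNR₂₁ + SNR₂₂ + 2·√(SNR₂₁·SNR₂₂), the supremum of f(β₁,β₂,ρ) over all (β₁,β₂,ρ) ∈ [0,1]³ satisfying g(β₁,β₂,ρ) ≥ b equals (1/2)·log₂(1 + (1 − ξ(b)²)·SNR₁₁) + (1/2)·log₂(1 + (1 − ξ(b)²)·SNR₁₂), attained at (β₁,β₂,ρ) = (1,1,ξ(b)). -/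
open Real

/-- ξ(b): the minimum channel-input correlation required to achieve the
target energy rate b. -/
noncomputable def xi (SNR₂₁ SNR₂₂ b : ℝ) : ℝ :=
  max 0 (b - (1 + SNR₂₁ + SNR₂₂)) / (2 * Real.sqrt (SNR₂₁ * SNR₂₂))

/-- The feedback sum-rate objective `f(β₁,β₂,ρ)`. -/
noncomputable def f (SNR₁₁ SNR₁₂ β₁ β₂ ρ : ℝ) : ℝ :=
  min
    ((1/2) * logb 2 (1 + β₁ * SNR₁₁ + β₂ * SNR₁₂ +
      2 * ρ * Real.sqrt (β₁ * SNR₁₁ * (β₂ * SNR₁₂))))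
    ((1/2) * logb 2 ((1 + β₁ * SNR₁₁ * (1 - ρ ^ 2)) * (1 + β₂ * SNR₁₂ * (1 - ρ ^ 2))))

/-- The feedback energy-rate constraint function `g(β₁,β₂,ρ)`. -/
noncomputable def g (SNR₂₁ SNR₂₂ β₁ β₂ ρ : ℝ) : ℝ :=
  1 + SNR₂₁ + SNR₂₂ +
    2 * (ρ * Real.sqrt (β₁ * β₂) + Real.sqrt ((1 - β₁) * (1 - β₂))) *
      Real.sqrt (SNR₂₁ * SNR₂₂)

/-!
The constraint `g ≥ b` says exactly that the correlation between the two channel inputs is at least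
`ξ(b)`. By Cauchy–Schwarz this correlation `c` satisfies `βᵢ(1 - ρ²) ≤ 1 - c²` for both
transmitters, which bounds both factors in the second term of the minimum `f`. Past the crossing
point `ρ⋆` the second term is the smaller one, so full information power with correlation `ξ(b)`
attains the bound.
-/

/-- The correlation between the two channel inputs when transmitter `i` spends the power fraction
`βᵢ` on information symbols with mutual correlation `ρ`, and the remaining power on a common energy
signal. -/
noncomputable def inputCorrelation (β₁ β₂ ρ : ℝ) : ℝ :=
  ρ * √(β₁ * β₂) + √((1 - β₁) * (1 - β₂))

/-- The sum, in bits per channel use, of the capacities of two parallel Gaussian channels with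
signal-to-noise ratios `P` and `Q`. It expresses the sum of the two individual-rate bounds. -/
noncomputable def parallelRate (P Q : ℝ) : ℝ :=
  (1/2) * logb 2 (1 + P) + (1/2) * logb 2 (1 + Q)

section InputCorrelation

variable {β₁ β₂ ρ : ℝ}

theorem inputCorrelation_comm (β₁ β₂ ρ : ℝ) :
    inputCorrelation β₁ β₂ ρ = inputCorrelation β₂ β₁ ρ := by
  simp only [inputCorrelation, mul_comm]

theorem inputCorrelation_one_one (ρ : ℝ) : inputCorrelation 1 1 ρ = ρ := by
  simp [inputCorrelation]

theorem inputCorrelation_nonneg (hρ : 0 ≤ ρ) : 0 ≤ inputCorrelation β₁ β₂ ρ := by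
  unfold inputCorrelation
  positivity

theorem sq_inputCorrelation_le (h₁ : β₁ ∈ Set.Icc 0 1) (h₂ : β₂ ∈ Set.Icc 0 1) :
    inputCorrelation β₁ β₂ ρ ^ 2 ≤ 1 - β₁ * (1 - ρ ^ 2) := by
  have h₁' : 0 ≤ 1 - β₁ := sub_nonneg.2 h₁.2
  have h₂' : 0 ≤ 1 - β₂ := sub_nonneg.2 h₂.2
  -- Cauchy–Schwarz for `(ρ√β₁, √(1 - β₁))` and `(√β₂, √(1 - β₂))`, the latter a unit vector.
  calc inputCorrelation β₁ β₂ ρ ^ 2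
      = (ρ * √β₁ * √β₂ + √(1 - β₁) * √(1 - β₂)) ^ 2 := by
        rw [inputCorrelation, sqrt_mul h₁.1, sqrt_mul h₁', mul_assoc]
    _ ≤ ((ρ * √β₁) ^ 2 + √(1 - β₁) ^ 2) * (√(1 - β₂) ^ 2 + √β₂ ^ 2) := by
        rw [sq_add_sq_mul_sq_add_sq]
        exact le_add_of_nonneg_left (sq_nonneg _)
    _ = 1 - β₁ * (1 - ρ ^ 2) := by
        rw [mul_pow, sq_sqrt h₁.1, sq_sqrt h₁', sq_sqrt h₂.1, sq_sqrt h₂']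
        ring

theorem mul_one_sub_sq_le_of_le_inputCorrelation {r : ℝ} (h₁ : β₁ ∈ Set.Icc 0 1)
    (h₂ : β₂ ∈ Set.Icc 0 1) (hr : 0 ≤ r) (h : r ≤ inputCorrelation β₁ β₂ ρ) :
    β₁ * (1 - ρ ^ 2) ≤ 1 - r ^ 2 := by
  have hsq : r ^ 2 ≤ inputCorrelation β₁ β₂ ρ ^ 2 := pow_le_pow_left₀ hr h 2
  linarith [sq_inputCorrelation_le (ρ := ρ) h₁ h₂]

end InputCorrelation

section EnergyRate

variable {S T b r : ℝ}

theorem xi_nonneg (S T b : ℝ) : 0 ≤ xi S T b := by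
  unfold xi
  positivity

theorem xi_le_iff (hST : 0 < S * T) (hr : 0 ≤ r) :
    xi S T b ≤ r ↔ b ≤ 1 + S + T + 2 * r * √(S * T) := by
  have hr' : 0 ≤ r * (2 * √(S * T)) := by positivity
  rw [xi, div_le_iff₀ (by positivity), max_le_iff, and_iff_right hr', sub_le_iff_le_add',
    mul_left_comm, mul_assoc]

theorem lt_xi_iff (hST : 0 < S * T) (hr : 0 ≤ r) :
    r < xi S T b ↔ 1 + S + T + 2 * r * √(S * T) < b :=
  lt_iff_lt_of_le_iff_le (xi_le_iff hST hr)

theorem le_g_iff {β₁ β₂ ρ : ℝ} (hST : 0 < S * T) (hρ : 0 ≤ ρ) :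
    b ≤ g S T β₁ β₂ ρ ↔ xi S T b ≤ inputCorrelation β₁ β₂ ρ :=
  (xi_le_iff hST (inputCorrelation_nonneg hρ)).symm

end EnergyRate

section SumRate

variable {P P' Q Q' S T β₁ β₂ ρ r : ℝ}

theorem half_logb_mul_eq_parallelRate (hP : 0 ≤ P) (hQ : 0 ≤ Q) :
    (1/2) * logb 2 ((1 + P) * (1 + Q)) = parallelRate P Q := by
  rw [logb_mul (by positivity) (by positivity), mul_add, parallelRate]

theorem parallelRate_mono (hP : 0 ≤ P) (hQ : 0 ≤ Q) (hPP' : P ≤ P') (hQQ' : Q ≤ Q') :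
    parallelRate P Q ≤ parallelRate P' Q' := by
  unfold parallelRate
  gcongr <;> norm_num

theorem f_le_parallelRate_of_le_inputCorrelation (hS : 0 ≤ S) (hT : 0 ≤ T)
    (h₁ : β₁ ∈ Set.Icc 0 1) (h₂ : β₂ ∈ Set.Icc 0 1) (hρ : ρ ^ 2 ≤ 1) (hr : 0 ≤ r)
    (h : r ≤ inputCorrelation β₁ β₂ ρ) :
    f S T β₁ β₂ ρ ≤ parallelRate ((1 - r ^ 2) * S) ((1 - r ^ 2) * T) := by
  have hρ' : 0 ≤ 1 - ρ ^ 2 := sub_nonneg.2 hρ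
  have hP : 0 ≤ β₁ * S * (1 - ρ ^ 2) := mul_nonneg (mul_nonneg h₁.1 hS) hρ'
  have hQ : 0 ≤ β₂ * T * (1 - ρ ^ 2) := mul_nonneg (mul_nonneg h₂.1 hT) hρ'
  have hβ₁ : β₁ * (1 - ρ ^ 2) ≤ 1 - r ^ 2 :=
    mul_one_sub_sq_le_of_le_inputCorrelation h₁ h₂ hr h
  have hβ₂ : β₂ * (1 - ρ ^ 2) ≤ 1 - r ^ 2 :=
    mul_one_sub_sq_le_of_le_inputCorrelation h₂ h₁ hr (inputCorrelation_comm β₁ β₂ ρ ▸ h)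
  calc f S T β₁ β₂ ρ
      ≤ (1/2) * logb 2 ((1 + β₁ * S * (1 - ρ ^ 2)) * (1 + β₂ * T * (1 - ρ ^ 2))) :=
        min_le_right _ _
    _ = parallelRate (β₁ * S * (1 - ρ ^ 2)) (β₂ * T * (1 - ρ ^ 2)) :=
        half_logb_mul_eq_parallelRate hP hQ
    _ ≤ parallelRate ((1 - r ^ 2) * S) ((1 - r ^ 2) * T) := by
        apply parallelRate_mono hP hQ
        · rw [mul_right_comm]
          gcongr
        · rw [mul_right_comm]
          gcongr

theorem individualBound_le_jointBound_of_le (hS : 0 ≤ S) (hT : 0 ≤ T) (hρ : 0 ≤ ρ) (hρr : ρ ≤ r)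
    (hr : r ≤ 1)
    (h : (1 + S * (1 - ρ ^ 2)) * (1 + T * (1 - ρ ^ 2)) ≤ 1 + S + T + 2 * ρ * √(S * T)) :
    (1 + S * (1 - r ^ 2)) * (1 + T * (1 - r ^ 2)) ≤ 1 + S + T + 2 * r * √(S * T) := by
  have hρ' : 0 ≤ 1 - ρ ^ 2 := sub_nonneg.2 (pow_le_one₀ hρ (hρr.trans hr))
  have hr' : 0 ≤ 1 - r ^ 2 := sub_nonneg.2 (pow_le_one₀ (hρ.trans hρr) hr)
  calc (1 + S * (1 - r ^ 2)) * (1 + T * (1 - r ^ 2))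
      ≤ (1 + S * (1 - ρ ^ 2)) * (1 + T * (1 - ρ ^ 2)) := by gcongr
    _ ≤ 1 + S + T + 2 * ρ * √(S * T) := h
    _ ≤ 1 + S + T + 2 * r * √(S * T) := by gcongr

theorem f_one_one_eq_parallelRate (hS : 0 ≤ S) (hT : 0 ≤ T) (hr : r ^ 2 ≤ 1)
    (h : (1 + S * (1 - r ^ 2)) * (1 + T * (1 - r ^ 2)) ≤ 1 + S + T + 2 * r * √(S * T)) :
    f S T 1 1 r = parallelRate ((1 - r ^ 2) * S) ((1 - r ^ 2) * T) := by
  have hlog : (1/2) * logb 2 ((1 + S * (1 - r ^ 2)) * (1 + T * (1 - r ^ 2))) ≤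
      (1/2) * logb 2 (1 + S + T + 2 * r * √(S * T)) := by
    gcongr
    norm_num
  simp only [f, one_mul]
  rw [min_eq_right hlog, half_logb_mul_eq_parallelRate (by positivity) (by positivity),
    mul_comm S, mul_comm T]

end SumRate

/-- Proposition 3, case 2: for
1 + SNR₂₁ + SNR₂₂ + 2·ρ⋆(1,1)·√(SNR₂₁·SNR₂₂) < b < 1 + SNR₂₁ + SNR₂₂ + 2·√(SNR₂₁·SNR₂₂),
the feedback information sum-capacity is
½·log₂(1 + (1 − ξ(b)²)·SNR₁₁) + ½·log₂(1 + (1 − ξ(b)²)·SNR₁₂),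
attained at (1,1,ξ(b)). -/
theorem sum_capacity_feedback_high_energy (SNR₁₁ SNR₁₂ SNR₂₁ SNR₂₂ : ℝ)
    (hS₁₁ : 0 < SNR₁₁) (hS₁₂ : 0 < SNR₁₂) (hS₂₁ : 0 < SNR₂₁) (hS₂₂ : 0 < SNR₂₂)
    (ρs : ℝ) (hρs : ρs ∈ Set.Ioo (0:ℝ) 1)
    (hρseq : 1 + SNR₁₁ + SNR₁₂ + 2 * ρs * Real.sqrt (SNR₁₁ * SNR₁₂)
      = (1 + SNR₁₁ * (1 - ρs ^ 2)) * (1 + SNR₁₂ * (1 - ρs ^ 2)))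
    (b : ℝ)
    (hb₀ : 1 + SNR₂₁ + SNR₂₂ + 2 * ρs * Real.sqrt (SNR₂₁ * SNR₂₂) < b)
    (hb₁ : b < 1 + SNR₂₁ + SNR₂₂ + 2 * Real.sqrt (SNR₂₁ * SNR₂₂)) :
    IsGreatest
      {r : ℝ | ∃ β₁ ∈ Set.Icc (0:ℝ) 1, ∃ β₂ ∈ Set.Icc (0:ℝ) 1,
        ∃ ρ ∈ Set.Icc (0:ℝ) 1,
          g SNR₂₁ SNR₂₂ β₁ β₂ ρ ≥ b ∧ r = f SNR₁₁ SNR₁₂ β₁ β₂ ρ}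
      ((1/2) * logb 2 (1 + (1 - xi SNR₂₁ SNR₂₂ b ^ 2) * SNR₁₁) +
        (1/2) * logb 2 (1 + (1 - xi SNR₂₁ SNR₂₂ b ^ 2) * SNR₁₂)) ∧
    g SNR₂₁ SNR₂₂ 1 1 (xi SNR₂₁ SNR₂₂ b) ≥ b ∧
    f SNR₁₁ SNR₁₂ 1 1 (xi SNR₂₁ SNR₂₂ b)
      = (1/2) * logb 2 (1 + (1 - xi SNR₂₁ SNR₂₂ b ^ 2) * SNR₁₁) +
        (1/2) * logb 2 (1 + (1 - xi SNR₂₁ SNR₂₂ b ^ 2) * SNR₁₂) := by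
  have hST₂ : 0 < SNR₂₁ * SNR₂₂ := mul_pos hS₂₁ hS₂₂
  have hξ₀ : 0 ≤ xi SNR₂₁ SNR₂₂ b := xi_nonneg _ _ _
  have hξ₁ : xi SNR₂₁ SNR₂₂ b ≤ 1 := (xi_le_iff hST₂ zero_le_one).2 (by simpa using hb₁.le)
  have hρsξ : ρs < xi SNR₂₁ SNR₂₂ b := (lt_xi_iff hST₂ hρs.1.le).2 hb₀
  have hg : b ≤ g SNR₂₁ SNR₂₂ 1 1 (xi SNR₂₁ SNR₂₂ b) :=
    (le_g_iff hST₂ hξ₀).2 (inputCorrelation_one_one _).ge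
  have hf := f_one_one_eq_parallelRate hS₁₁.le hS₁₂.le (pow_le_one₀ hξ₀ hξ₁)
    (individualBound_le_jointBound_of_le hS₁₁.le hS₁₂.le hρs.1.le hρsξ.le hξ₁ hρseq.ge)
  refine ⟨⟨⟨1, by simp, 1, by simp, xi SNR₂₁ SNR₂₂ b, ⟨hξ₀, hξ₁⟩, hg, hf.symm⟩, ?_⟩, hg, hf⟩
  rintro _ ⟨β₁, hβ₁, β₂, hβ₂, ρ, ⟨hρ₀, hρ₁⟩, hge, rfl⟩
  exact f_le_parallelRate_of_le_inputCorrelation hS₁₁.le hS₁₂.le hβ₁ hβ₂ (pow_le_one₀ hρ₀ hρ₁) hξ₀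
    ((le_g_iff hST₂ hρ₀).1 hge)
end

section
/- Sum-capacity without feedback, single-user regime (Proposition 4, case 2): for every real b with 1 + SNR₂₁ + SNR₂₂ + 2·√(SNR₂₁·SNR₂₂)·min{ √(SNR₁₂/SNR₁₁), √(SNR₁₁/SNR₁₂) } < b ≤ 1 + SNR₂₁ + SNR₂₂ + 2·√(SNR₂₁·SNR₂₂), the supremum of f₀(β₁,β₂) over all (β₁,β₂) ∈ [0,1]² satisfying g₀(β₁,β₂) ≥ b equals (1/2)·log₂(1 + (1 − ξ(b)²)·max{SNR₁₁, SNR₁₂}), attained by setting βᵢ = 1 − ξ(b)² for the index i maximizing SNR₁ᵢ and βⱼ = 0 for the other index j. -/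
open Real

/-- The no-feedback sum-rate objective `f₀(β₁,β₂)`. -/
noncomputable def f₀ (SNR₁₁ SNR₁₂ β₁ β₂ : ℝ) : ℝ :=
  min
    ((1/2) * logb 2 (1 + β₁ * SNR₁₁ + β₂ * SNR₁₂))
    ((1/2) * logb 2 (1 + β₁ * SNR₁₁) + (1/2) * logb 2 (1 + β₂ * SNR₁₂))

/-- The no-feedback energy-rate constraint function `g₀(β₁,β₂)`. -/
noncomputable def g₀ (SNR₂₁ SNR₂₂ β₁ β₂ : ℝ) : ℝ :=
  1 + SNR₂₁ + SNR₂₂ + 2 * Real.sqrt ((1 - β₁) * SNR₂₁ * ((1 - β₂) * SNR₂₂))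

/-!
The energy constraint `b ≤ g₀ β₁ β₂` amounts to `ξ(b)² ≤ (1 - β₁)(1 - β₂)`, and the sum-rate is at
most `½ log₂ (1 + β₁ SNR₁₁ + β₂ SNR₁₂)`. It therefore suffices to maximise a linear form over a
region whose boundary is a hyperbola. The lower bound on `b` gives
`min SNR₁₁ SNR₁₂ ≤ ξ(b)² max SNR₁₁ SNR₁₂`; the hyperbola is then so steep, relative to the linear
form, that the maximum sits at the endpoint where the weaker transmitter sends no information.
-/

section Energy

variable {S₁ S₂ b β₁ β₂ : ℝ}

lemma xi_nonneg_s10 : 0 ≤ xi S₁ S₂ b := by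
  unfold xi
  positivity

lemma xi_le_iff_s10 {x : ℝ} (hS : 0 < S₁ * S₂) (hx : 0 ≤ x) :
    xi S₁ S₂ b ≤ x ↔ b ≤ 1 + S₁ + S₂ + 2 * √(S₁ * S₂) * x := by
  have hs : 0 < 2 * √(S₁ * S₂) := by positivity
  rw [xi, div_le_iff₀ hs, max_le_iff, and_iff_right (by positivity), sub_le_iff_le_add',
    mul_comm x]

lemma le_g₀_iff_xi_sq_le (hS : 0 < S₁ * S₂) (hβ₁ : β₁ ≤ 1) (hβ₂ : β₂ ≤ 1) :
    b ≤ g₀ S₁ S₂ β₁ β₂ ↔ xi S₁ S₂ b ^ 2 ≤ (1 - β₁) * (1 - β₂) := by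
  have hp : 0 ≤ (1 - β₁) * (1 - β₂) := mul_nonneg (sub_nonneg.2 hβ₁) (sub_nonneg.2 hβ₂)
  rw [← le_sqrt xi_nonneg_s10 hp, xi_le_iff_s10 hS (sqrt_nonneg _), mul_assoc 2, ← sqrt_mul hS.le,
    mul_comm (S₁ * S₂), ← mul_mul_mul_comm, g₀]

lemma le_g₀_one_sub_xi_sq_zero (hS : 0 < S₁ * S₂) :
    b ≤ g₀ S₁ S₂ (1 - xi S₁ S₂ b ^ 2) 0 :=
  (le_g₀_iff_xi_sq_le hS (sub_le_self 1 (sq_nonneg _)) zero_le_one).2 (by simp)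

lemma le_g₀_zero_one_sub_xi_sq (hS : 0 < S₁ * S₂) :
    b ≤ g₀ S₁ S₂ 0 (1 - xi S₁ S₂ b ^ 2) :=
  (le_g₀_iff_xi_sq_le hS zero_le_one (sub_le_self 1 (sq_nonneg _))).2 (by simp)

end Energy

section SumRate

variable {S₁ S₂ β₁ β₂ p : ℝ}

lemma f₀_zero_right : f₀ S₁ S₂ β₁ 0 = 1 / 2 * logb 2 (1 + β₁ * S₁) := by
  simp [f₀]

lemma f₀_zero_left : f₀ S₁ S₂ 0 β₂ = 1 / 2 * logb 2 (1 + β₂ * S₂) := by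
  simp [f₀]

lemma min_sqrt_div_sqrt_div_le_iff {x : ℝ} (hS₁ : 0 < S₁) (hS₂ : 0 < S₂) (hx : 0 ≤ x) :
    min √(S₂ / S₁) √(S₁ / S₂) ≤ x ↔ min S₁ S₂ ≤ x ^ 2 * max S₁ S₂ := by
  wlog h : S₂ ≤ S₁ generalizing S₁ S₂
  · rw [min_comm, min_comm S₁, max_comm]
    exact this hS₂ hS₁ (le_of_not_ge h)
  have hle : √(S₂ / S₁) ≤ √(S₁ / S₂) :=
    sqrt_le_sqrt (((div_le_one hS₁).2 h).trans ((one_le_div hS₂).2 h))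
  rw [min_eq_left hle, min_eq_right h, max_eq_left h, sqrt_le_left hx, div_le_iff₀ hS₁]

lemma mul_add_mul_le_one_sub_mul (hS₁ : 0 ≤ S₁) (hS : S₂ ≤ p * S₁) (hβ₁ : β₁ ≤ 1) (hβ₂ : 0 ≤ β₂)
    (hp : p ≤ (1 - β₁) * (1 - β₂)) : β₁ * S₁ + β₂ * S₂ ≤ (1 - p) * S₁ := by
  have hp_le : p ≤ 1 - β₁ :=
    hp.trans (mul_le_of_le_one_right (sub_nonneg.2 hβ₁) (sub_le_self 1 hβ₂))
  have hβ : β₁ + β₂ * p ≤ 1 - p := by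
    linarith [mul_le_mul_of_nonneg_left hp_le hβ₂]
  calc β₁ * S₁ + β₂ * S₂ ≤ β₁ * S₁ + β₂ * (p * S₁) := by gcongr
    _ = (β₁ + β₂ * p) * S₁ := by ring
    _ ≤ (1 - p) * S₁ := by gcongr

lemma mul_add_mul_le_one_sub_mul_max (hS₁ : 0 ≤ S₁) (hS₂ : 0 ≤ S₂)
    (hS : min S₁ S₂ ≤ p * max S₁ S₂) (hβ₁ : β₁ ∈ Set.Icc 0 1) (hβ₂ : β₂ ∈ Set.Icc 0 1)
    (hp : p ≤ (1 - β₁) * (1 - β₂)) : β₁ * S₁ + β₂ * S₂ ≤ (1 - p) * max S₁ S₂ := by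
  wlog h : S₂ ≤ S₁ generalizing S₁ S₂ β₁ β₂
  · rw [add_comm, max_comm]
    rw [min_comm, max_comm] at hS
    rw [mul_comm] at hp
    exact this hS₂ hS₁ hS hβ₂ hβ₁ hp (le_of_not_ge h)
  rw [min_eq_right h, max_eq_left h] at hS
  rw [max_eq_left h]
  exact mul_add_mul_le_one_sub_mul hS₁ hS hβ₁.2 hβ₂.1 hp

lemma f₀_le_logb_one_sub_mul_max (hS₁ : 0 ≤ S₁) (hS₂ : 0 ≤ S₂)
    (hS : min S₁ S₂ ≤ p * max S₁ S₂) (hβ₁ : β₁ ∈ Set.Icc 0 1) (hβ₂ : β₂ ∈ Set.Icc 0 1)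
    (hp : p ≤ (1 - β₁) * (1 - β₂)) :
    f₀ S₁ S₂ β₁ β₂ ≤ 1 / 2 * logb 2 (1 + (1 - p) * max S₁ S₂) := by
  have hpos : 0 < 1 + β₁ * S₁ + β₂ * S₂ := by
    linarith [mul_nonneg hβ₁.1 hS₁, mul_nonneg hβ₂.1 hS₂]
  calc f₀ S₁ S₂ β₁ β₂ ≤ 1 / 2 * logb 2 (1 + β₁ * S₁ + β₂ * S₂) := min_le_left _ _
    _ ≤ 1 / 2 * logb 2 (1 + (1 - p) * max S₁ S₂) := by
      rw [add_assoc] at hpos ⊢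
      gcongr
      · exact one_lt_two
      · exact mul_add_mul_le_one_sub_mul_max hS₁ hS₂ hS hβ₁ hβ₂ hp

end SumRate

/-- Proposition 4, case 2: for
1 + SNR₂₁ + SNR₂₂ + 2·√(SNR₂₁·SNR₂₂)·min{√(SNR₁₂/SNR₁₁), √(SNR₁₁/SNR₁₂)} < b
  ≤ 1 + SNR₂₁ + SNR₂₂ + 2·√(SNR₂₁·SNR₂₂),
the no-feedback information sum-capacity is
½·log₂(1 + (1 − ξ(b)²)·max{SNR₁₁, SNR₁₂}), attained by giving the whole
information power split 1 − ξ(b)² to the transmitter with the highest SNR. -/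
theorem sum_capacity_no_feedback_single_user (SNR₁₁ SNR₁₂ SNR₂₁ SNR₂₂ : ℝ)
    (hS₁₁ : 0 < SNR₁₁) (hS₁₂ : 0 < SNR₁₂) (hS₂₁ : 0 < SNR₂₁) (hS₂₂ : 0 < SNR₂₂)
    (b : ℝ)
    (hb₀ : 1 + SNR₂₁ + SNR₂₂ + 2 * Real.sqrt (SNR₂₁ * SNR₂₂) *
      min (Real.sqrt (SNR₁₂ / SNR₁₁)) (Real.sqrt (SNR₁₁ / SNR₁₂)) < b)
    (hb₁ : b ≤ 1 + SNR₂₁ + SNR₂₂ + 2 * Real.sqrt (SNR₂₁ * SNR₂₂)) :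
    IsGreatest
      {r : ℝ | ∃ β₁ ∈ Set.Icc (0:ℝ) 1, ∃ β₂ ∈ Set.Icc (0:ℝ) 1,
          g₀ SNR₂₁ SNR₂₂ β₁ β₂ ≥ b ∧ r = f₀ SNR₁₁ SNR₁₂ β₁ β₂}
      ((1/2) * logb 2 (1 + (1 - xi SNR₂₁ SNR₂₂ b ^ 2) * max SNR₁₁ SNR₁₂)) ∧
    (SNR₁₂ ≤ SNR₁₁ →
      g₀ SNR₂₁ SNR₂₂ (1 - xi SNR₂₁ SNR₂₂ b ^ 2) 0 ≥ b ∧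
      f₀ SNR₁₁ SNR₁₂ (1 - xi SNR₂₁ SNR₂₂ b ^ 2) 0
        = (1/2) * logb 2 (1 + (1 - xi SNR₂₁ SNR₂₂ b ^ 2) * max SNR₁₁ SNR₁₂)) ∧
    (SNR₁₁ ≤ SNR₁₂ →
      g₀ SNR₂₁ SNR₂₂ 0 (1 - xi SNR₂₁ SNR₂₂ b ^ 2) ≥ b ∧
      f₀ SNR₁₁ SNR₁₂ 0 (1 - xi SNR₂₁ SNR₂₂ b ^ 2)
        = (1/2) * logb 2 (1 + (1 - xi SNR₂₁ SNR₂₂ b ^ 2) * max SNR₁₁ SNR₁₂)) := by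
  have hS₂ : 0 < SNR₂₁ * SNR₂₂ := mul_pos hS₂₁ hS₂₂
  have hξ : 1 - xi SNR₂₁ SNR₂₂ b ^ 2 ∈ Set.Icc (0 : ℝ) 1 :=
    ⟨sub_nonneg.2 (pow_le_one₀ xi_nonneg_s10 ((xi_le_iff_s10 hS₂ zero_le_one).2 (by simpa using hb₁))),
      sub_le_self 1 (sq_nonneg _)⟩
  have hzero : (0 : ℝ) ∈ Set.Icc (0 : ℝ) 1 := Set.left_mem_Icc.2 zero_le_one
  have hmin : min SNR₁₁ SNR₁₂ ≤ xi SNR₂₁ SNR₂₂ b ^ 2 * max SNR₁₁ SNR₁₂ :=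
    (min_sqrt_div_sqrt_div_le_iff hS₁₁ hS₁₂ xi_nonneg_s10).1 <| le_of_not_ge fun h =>
      hb₀.not_ge ((xi_le_iff_s10 hS₂ (by positivity)).1 h)
  have hleft := le_g₀_one_sub_xi_sq_zero (b := b) hS₂
  have hright := le_g₀_zero_one_sub_xi_sq (b := b) hS₂
  refine ⟨⟨?attained, ?upper⟩, fun h => ⟨hleft, ?_⟩, fun h => ⟨hright, ?_⟩⟩
  case attained =>
    rcases le_total SNR₁₂ SNR₁₁ with h | h
    · exact ⟨_, hξ, 0, hzero, hleft, by rw [f₀_zero_right, max_eq_left h]⟩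
    · exact ⟨0, hzero, _, hξ, hright, by rw [f₀_zero_left, max_eq_right h]⟩
  case upper =>
    rintro _ ⟨β₁, hβ₁, β₂, hβ₂, hb, rfl⟩
    exact f₀_le_logb_one_sub_mul_max hS₁₁.le hS₁₂.le hmin hβ₁ hβ₂
      ((le_g₀_iff_xi_sq_le hS₂ hβ₁.2 hβ₂.2).1 hb)
  · rw [f₀_zero_right, max_eq_left h]
  · rw [f₀_zero_left, max_eq_right h]
end

section
/- Maximum energy rate with feedback at the no-feedback sum-capacity (Theorem 3): the unique real number B in the interval [1 + SNR₂₁ + SNR₂₂, 1 + SNR₂₁ + SNR₂₂ + 2·√(SNR₂₁·SNR₂₂)] satisfying (1 + (1 − ξ(B)²)·SNR₁₁)·(1 + (1 − ξ(B)²)·SNR₁₂) = 1 + SNR₁₁ + SNR₁₂ is B_FB = 1 + SNR₂₁ + SNR₂₂ + 2·√((1 − γ)·SNR₂₁·SNR₂₂). -/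
/-- The constant γ of Theorem 3. -/
noncomputable def gammaFB (SNR₁₁ SNR₁₂ : ℝ) : ℝ :=
  (SNR₁₁ + SNR₁₂) / (2 * SNR₁₁ * SNR₁₂) *
    (Real.sqrt (1 + 4 * SNR₁₁ * SNR₁₂ / (SNR₁₁ + SNR₁₂)) - 1)

section SumRate

variable {a b : ℝ}

lemma gammaFB_pos (ha : 0 < a) (hb : 0 < b) : 0 < gammaFB a b := by
  have one_lt_sqrt : 1 < √(1 + 4 * a * b / (a + b)) := by
    rw [Real.lt_sqrt zero_le_one, one_pow, lt_add_iff_pos_right]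
    positivity
  exact mul_pos (by positivity) (sub_pos.2 one_lt_sqrt)

lemma discrim_sumRate_quadratic (ha : 0 < a) (hb : 0 < b) :
    discrim (a * b) (a + b) (-(a + b)) =
      ((a + b) * √(1 + 4 * a * b / (a + b))) * ((a + b) * √(1 + 4 * a * b / (a + b))) := by
  rw [mul_mul_mul_comm, Real.mul_self_sqrt (by positivity), discrim]
  field_simp
  ring

lemma sumRate_eq_iff_eq_gammaFB {y : ℝ} (ha : 0 < a) (hb : 0 < b) (hy : 0 ≤ y) :
    (1 + y * a) * (1 + y * b) = 1 + a + b ↔ y = gammaFB a b := by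
  have quadratic : (1 + y * a) * (1 + y * b) = 1 + a + b ↔
      a * b * (y * y) + (a + b) * y + -(a + b) = 0 := by
    constructor <;> intro h <;> linear_combination h
  have pos_root : (-(a + b) + (a + b) * √(1 + 4 * a * b / (a + b))) / (2 * (a * b)) =
      gammaFB a b := by
    rw [gammaFB]
    ring
  have neg_root : (-(a + b) - (a + b) * √(1 + 4 * a * b / (a + b))) / (2 * (a * b)) < 0 :=
    div_neg_of_neg_of_pos
      (sub_neg.2 <| (neg_neg_of_pos (by positivity)).trans_le (by positivity)) (by positivity)
  rw [quadratic, quadratic_eq_zero_iff (by positivity) (discrim_sumRate_quadratic ha hb), pos_root,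
    or_iff_left (neg_root.trans_le hy).ne']

lemma gammaFB_lt_one (ha : 0 < a) (hb : 0 < b) : gammaFB a b < 1 := by
  have root := (sumRate_eq_iff_eq_gammaFB ha hb (gammaFB_pos ha hb).le).2 rfl
  have one_sub_gammaFB_eq : (a + b) * (1 - gammaFB a b) = a * b * gammaFB a b ^ 2 := by
    linear_combination -root
  have product_pos : 0 < (a + b) * (1 - gammaFB a b) :=
    one_sub_gammaFB_eq ▸ mul_pos (mul_pos ha hb) (pow_pos (gammaFB_pos ha hb) 2)
  exact sub_pos.1 (pos_of_mul_pos_right product_pos (by positivity))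

lemma sumRate_one_sub_sq_eq_iff {ρ : ℝ} (ha : 0 < a) (hb : 0 < b) (hρ : ρ ∈ Set.Icc 0 1) :
    (1 + (1 - ρ ^ 2) * a) * (1 + (1 - ρ ^ 2) * b) = 1 + a + b ↔ ρ = √(1 - gammaFB a b) := by
  have one_sub_sq_nonneg : 0 ≤ 1 - ρ ^ 2 := sub_nonneg.2 (pow_le_one₀ hρ.1 hρ.2)
  have one_sub_gammaFB_nonneg : 0 ≤ 1 - gammaFB a b := sub_nonneg.2 (gammaFB_lt_one ha hb).le
  calc (1 + (1 - ρ ^ 2) * a) * (1 + (1 - ρ ^ 2) * b) = 1 + a + b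
      ↔ 1 - ρ ^ 2 = gammaFB a b := sumRate_eq_iff_eq_gammaFB ha hb one_sub_sq_nonneg
    _ ↔ 1 - gammaFB a b = ρ ^ 2 := by constructor <;> intro h <;> linarith
    _ ↔ √(1 - gammaFB a b) = ρ := (Real.sqrt_eq_iff_eq_sq one_sub_gammaFB_nonneg hρ.1).symm
    _ ↔ ρ = √(1 - gammaFB a b) := eq_comm

end SumRate

section EnergyRate

/-- The energy rate at the harvester when the channel inputs have correlation `ρ` and its
signal-to-noise ratios are `c` and `d`; `xi c d` recovers `ρ ≥ 0` from it. -/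
noncomputable def energyRate (c d ρ : ℝ) : ℝ :=
  1 + c + d + 2 * (ρ * √(c * d))

variable {c d : ℝ}

lemma energyRate_sqrt {r : ℝ} (hr : 0 ≤ r) :
    energyRate c d √r = 1 + c + d + 2 * √(r * c * d) := by
  rw [energyRate, mul_assoc r, Real.sqrt_mul hr]

lemma energyRate_mem_Icc_iff {ρ : ℝ} (hcd : 0 < c * d) :
    energyRate c d ρ ∈ Set.Icc (1 + c + d) (1 + c + d + 2 * √(c * d)) ↔ ρ ∈ Set.Icc 0 1 := by
  have sqrt_pos : 0 < √(c * d) := Real.sqrt_pos.2 hcd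
  simp only [energyRate, Set.mem_Icc, le_add_iff_nonneg_right, add_le_add_iff_left,
    mul_nonneg_iff_of_pos_left (zero_lt_two' ℝ), mul_nonneg_iff_of_pos_right sqrt_pos,
    mul_le_mul_iff_right₀ two_pos, mul_le_iff_le_one_left sqrt_pos]

lemma xi_energyRate {ρ : ℝ} (hcd : 0 < c * d) (hρ : 0 ≤ ρ) : xi c d (energyRate c d ρ) = ρ := by
  have : 0 < √(c * d) := Real.sqrt_pos.2 hcd
  rw [xi, energyRate, add_sub_cancel_left, max_eq_right (by positivity)]
  field_simp

lemma energyRate_xi {b : ℝ} (hcd : 0 < c * d) (hb : 1 + c + d ≤ b) :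
    energyRate c d (xi c d b) = b := by
  have : 0 < √(c * d) := Real.sqrt_pos.2 hcd
  rw [energyRate, xi, max_eq_right (sub_nonneg.2 hb)]
  field_simp
  ring

lemma xi_mem_Icc {b : ℝ} (hcd : 0 < c * d)
    (hb : b ∈ Set.Icc (1 + c + d) (1 + c + d + 2 * √(c * d))) : xi c d b ∈ Set.Icc 0 1 := by
  rwa [← energyRate_mem_Icc_iff hcd, energyRate_xi hcd hb.1]

end EnergyRate

/-- Theorem 3: the unique B ∈ [1+SNR₂₁+SNR₂₂, 1+SNR₂₁+SNR₂₂+2√(SNR₂₁·SNR₂₂)]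
with (1+(1−ξ(B)²)·SNR₁₁)·(1+(1−ξ(B)²)·SNR₁₂) = 1+SNR₁₁+SNR₁₂ is
B_FB = 1 + SNR₂₁ + SNR₂₂ + 2·√((1−γ)·SNR₂₁·SNR₂₂). -/
theorem max_energy_rate_with_feedback (SNR₁₁ SNR₁₂ SNR₂₁ SNR₂₂ : ℝ)
    (hS₁₁ : 0 < SNR₁₁) (hS₁₂ : 0 < SNR₁₂) (hS₂₁ : 0 < SNR₂₁) (hS₂₂ : 0 < SNR₂₂) :
    (1 + SNR₂₁ + SNR₂₂ +
        2 * Real.sqrt ((1 - gammaFB SNR₁₁ SNR₁₂) * SNR₂₁ * SNR₂₂)) ∈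
      Set.Icc (1 + SNR₂₁ + SNR₂₂)
        (1 + SNR₂₁ + SNR₂₂ + 2 * Real.sqrt (SNR₂₁ * SNR₂₂)) ∧
    (1 + (1 - xi SNR₂₁ SNR₂₂ (1 + SNR₂₁ + SNR₂₂ +
          2 * Real.sqrt ((1 - gammaFB SNR₁₁ SNR₁₂) * SNR₂₁ * SNR₂₂)) ^ 2) * SNR₁₁) *
      (1 + (1 - xi SNR₂₁ SNR₂₂ (1 + SNR₂₁ + SNR₂₂ +
          2 * Real.sqrt ((1 - gammaFB SNR₁₁ SNR₁₂) * SNR₂₁ * SNR₂₂)) ^ 2) * SNR₁₂)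
      = 1 + SNR₁₁ + SNR₁₂ ∧
    ∀ B ∈ Set.Icc (1 + SNR₂₁ + SNR₂₂)
        (1 + SNR₂₁ + SNR₂₂ + 2 * Real.sqrt (SNR₂₁ * SNR₂₂)),
      (1 + (1 - xi SNR₂₁ SNR₂₂ B ^ 2) * SNR₁₁) *
          (1 + (1 - xi SNR₂₁ SNR₂₂ B ^ 2) * SNR₁₂) = 1 + SNR₁₁ + SNR₁₂ →
      B = 1 + SNR₂₁ + SNR₂₂ +
        2 * Real.sqrt ((1 - gammaFB SNR₁₁ SNR₁₂) * SNR₂₁ * SNR₂₂) := by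
  have hcd : 0 < SNR₂₁ * SNR₂₂ := mul_pos hS₂₁ hS₂₂
  have one_sub_nonneg : 0 ≤ 1 - gammaFB SNR₁₁ SNR₁₂ := sub_nonneg.2 (gammaFB_lt_one hS₁₁ hS₁₂).le
  have sqrt_mem : √(1 - gammaFB SNR₁₁ SNR₁₂) ∈ Set.Icc 0 1 :=
    ⟨Real.sqrt_nonneg _, Real.sqrt_le_one.2 (sub_le_self _ (gammaFB_pos hS₁₁ hS₁₂).le)⟩
  rw [← energyRate_sqrt one_sub_nonneg, xi_energyRate hcd sqrt_mem.1]
  refine ⟨(energyRate_mem_Icc_iff hcd).2 sqrt_mem,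
    (sumRate_one_sub_sq_eq_iff hS₁₁ hS₁₂ sqrt_mem).2 rfl, fun B hB hrate ↦ ?_⟩
  rw [← (sumRate_one_sub_sq_eq_iff hS₁₁ hS₁₂ (xi_mem_Icc hcd hB)).1 hrate,
    energyRate_xi hcd hB.1]
end
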